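/- Let R be the quotient of ℂ⟨e1,e2,e3⟩ by the two-sided ideal generated by e1e2 + e2e1 − e3, e1e3 + e3e1, e2e3 − e3e2, e2², and e3². Then h_0 = 1 and h_n = 2 for every n ≥ 1; equivalently, the Poincaré series Σ_{n≥0} h_n z^n equals (1+z)/(1−z). -/

import Mathlib

open CategoryTheory FreeAlgebra

/-- `Ext^m_R(ℂ,ℂ)` as a ℂ-module, where `ℂ` is an `R`-module via the augmentation `ε`. -/
noncomputable def extC (R : Type) [Ring R] [Algebra ℂ R] (ε : R →ₐ[ℂ] ℂ) (m : ℕ) :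
    ModuleCat ℂ :=
  letI : Module R ℂ := Module.compHom ℂ ε.toRingHom
  ((Ext ℂ (ModuleCat R) m).obj (Opposite.op (ModuleCat.of R ℂ))).obj (ModuleCat.of R ℂ)

/-- `h_m = dim_ℂ Ext^m_R(ℂ,ℂ)`. -/
noncomputable def extDim (R : Type) [Ring R] [Algebra ℂ R] (ε : R →ₐ[ℂ] ℂ) (m : ℕ) : ℕ :=
  Module.finrank ℂ (extC R ε m)

/-- Relations: `e1e2 + e2e1 = e3`, `e1e3 + e3e1 = 0`, `e2e3 - e3e2 = 0`, `e2² = 0`, `e3² = 0`. -/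
inductive CRel : FreeAlgebra ℂ (Fin 3) → FreeAlgebra ℂ (Fin 3) → Prop
  | r12 : CRel (ι ℂ 0 * ι ℂ 1 + ι ℂ 1 * ι ℂ 0) (ι ℂ 2)
  | r13 : CRel (ι ℂ 0 * ι ℂ 2 + ι ℂ 2 * ι ℂ 0) 0
  | r23 : CRel (ι ℂ 1 * ι ℂ 2 - ι ℂ 2 * ι ℂ 1) 0
  | r22 : CRel (ι ℂ 1 * ι ℂ 1) 0
  | r33 : CRel (ι ℂ 2 * ι ℂ 2) 0

/-!
Write `a, b, c` for the generators. Letting `R` act on itself by right multiplication gives `4 × 4`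
matrices over `ℂ[X]`, acting on row vectors, which show that `R` is free over `ℂ[a]` on
`1, b, c, bc`. In these coordinates the left annihilators are computed by hand: the trivial module
has the free resolution `⋯ → R² → R² → R² → R`, whose last map is the column `(b, a)` and whose
other maps are the matrices `[±b, 0; aⁿ⁺¹, n c + a b]` for `n ≥ 1`; exactness uses that the integers
`n + 1` are invertible. All entries lie in the augmentation ideal, so the differentials of
`Hom_R(-, ℂ)` vanish and `h_n` is the rank of the `n`-th term.
-/

universe u

open Polynomial Matrix

section HomologicalAlgebra

lemma quasiIso_of_exact {S : Type u} [Ring S] {K : ChainComplex (ModuleCat.{u} S) ℕ}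
    {Z : ModuleCat.{u} S} (π : K ⟶ (ChainComplex.single₀ _).obj Z)
    (surjective : Function.Surjective (π.f 0)) (exact_zero : Function.Exact (K.d 1 0) (π.f 0))
    (exact_succ : ∀ n, Function.Exact (K.d (n + 2) (n + 1)) (K.d (n + 1) n)) : QuasiIso π := by
  refine ⟨fun n ↦ ?_⟩
  cases n with
  | zero =>
    rw [ChainComplex.quasiIsoAt₀_iff,
      ShortComplex.quasiIso_iff_of_zeros' _ (K.shape 0 0 (by simp)) rfl rfl,
      ShortComplex.moduleCat_exact_iff]
    exact ⟨fun x hx ↦ (exact_zero x).1 hx, (ModuleCat.epi_iff_surjective _).2 surjective⟩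
  | succ n =>
    rw [quasiIsoAt_iff_exactAt' (hL := ChainComplex.exactAt_succ_single_obj ..),
      HomologicalComplex.exactAt_iff' _ (n + 2) (n + 1) n (by simp) (by simp),
      ShortComplex.moduleCat_exact_iff]
    exact fun x hx ↦ (exact_succ n x).1 hx

lemma nonempty_ext_iso_hom_of_minimal {k C : Type*} [Ring k] [Category* C] [Abelian C]
    [Linear k C] [EnoughProjectives C] {Y Z : C} (P : ProjectiveResolution Y)
    (minimal : ∀ n (f : P.complex.X n ⟶ Z), P.complex.d (n + 1) n ≫ f = 0) (n : ℕ) :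
    Nonempty (((Ext k C n).obj (Opposite.op Y)).obj Z ≅ ModuleCat.of k (P.complex.X n ⟶ Z)) := by
  let L := P.complex.linearYonedaObj k Z
  have d_eq_zero (i j : ℕ) : L.d i j = 0 := by
    by_cases hij : i + 1 = j
    · subst hij
      ext f
      exact minimal i f
    · exact L.shape _ _ hij
  exact ⟨P.isoExt n Z ≪≫ (ShortComplex.HomologyData.ofZeros (L.sc n)
    (d_eq_zero _ _) (d_eq_zero _ _)).left.homologyIso⟩

end HomologicalAlgebra

section TrivialModule

variable {k S : Type*} [Field k] [Ring S] [Algebra k S]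

/-- The ground field `k` regarded as an `S`-module through the augmentation `ε`. -/
def TrivialModule (_ε : S →ₐ[k] k) : Type _ := k

noncomputable instance (ε : S →ₐ[k] k) : AddCommGroup (TrivialModule ε) :=
  inferInstanceAs (AddCommGroup k)

noncomputable instance (ε : S →ₐ[k] k) : Module S (TrivialModule ε) :=
  Module.compHom k ε.toRingHom

noncomputable instance (ε : S →ₐ[k] k) : Module k (TrivialModule ε) :=
  inferInstanceAs (Module k k)

lemma trivialModule_smul_def {ε : S →ₐ[k] k} (x : S) (z : TrivialModule ε) : x • z = ε x • z := rfl

/-- The augmentation `ε` as a map of `S`-modules. -/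
noncomputable def augmentation (ε : S →ₐ[k] k) : S →ₗ[S] TrivialModule ε where
  toFun := ε
  map_add' := map_add ε
  map_smul' := map_mul ε

lemma linearMap_trivialModule_eq_zero {ι : Type*} [Finite ι] {ε : S →ₐ[k] k}
    (f : (ι → S) →ₗ[S] TrivialModule ε) {x : ι → S} (hx : ∀ i, ε (x i) = 0) : f x = 0 := by
  classical
  cases nonempty_fintype ι
  rw [f.pi_apply_eq_sum_univ]
  exact Finset.sum_eq_zero fun i _ ↦ by
    rw [trivialModule_smul_def, hx, zero_smul]

/-- A minimal resolution of the trivial module by finite free left `S`-modules. Elements of the free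
modules are row vectors and the differentials multiply them on the right by the matrices `d n`;
minimality is the condition that `ε` kills the entries of these matrices. -/
structure MinimalFreeResolution (ε : S →ₐ[k] k) where
  rank : ℕ → ℕ
  d : ∀ n, Matrix (Fin (rank (n + 1))) (Fin (rank n)) S
  aug : (Fin (rank 0) → S) →ₗ[S] TrivialModule ε
  aug_surjective : Function.Surjective aug
  exact_aug : Function.Exact (d 0).vecMulLinear aug
  exact_succ : ∀ n, Function.Exact (d (n + 1)).vecMulLinear (d n).vecMulLinear
  map_d_eq_zero : ∀ n i j, ε (d n i j) = 0

end TrivialModule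

section MinimalFreeResolution

variable {k S : Type u} [Field k] [Ring S] [Algebra k S]

/-- An `S`-linear map from a free module to the trivial module is given by its values on the
standard basis. -/
noncomputable def homTrivialModuleEquiv (ε : S →ₐ[k] k) (ι : Type) [Fintype ι] [DecidableEq ι] :
    (ModuleCat.of S (ι → S) ⟶ ModuleCat.of S (TrivialModule ε)) ≃ₗ[k] (ι → k) where
  toFun f i := f.hom (Pi.single i 1)
  map_add' f g := rfl
  map_smul' r f := funext fun i ↦
    congrArg (· • (show TrivialModule ε from f.hom (Pi.single i 1))) (ε.commutes r)
  invFun z := ModuleCat.ofHom (Fintype.linearCombination S (M := TrivialModule ε) z)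
  left_inv f := by
    ext1
    refine (Pi.basisFun S ι).ext fun i ↦ ?_
    simp
  right_inv z := funext fun i ↦
    (Fintype.linearCombination_apply_single S (M := TrivialModule ε) z i 1).trans (one_smul S _)

namespace MinimalFreeResolution

variable {ε : S →ₐ[k] k} (P : MinimalFreeResolution ε)

/-- The chain complex of free modules underlying the resolution. -/
noncomputable def complex : ChainComplex (ModuleCat.{u} S) ℕ :=
  ChainComplex.of (fun n ↦ ModuleCat.of S (Fin (P.rank n) → S))
    (fun n ↦ ModuleCat.ofHom (P.d n).vecMulLinear) fun n ↦ by
      ext1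
      exact (P.exact_succ n).linearMap_comp_eq_zero

lemma complex_d_succ (n : ℕ) :
    P.complex.d (n + 1) n = ModuleCat.ofHom (P.d n).vecMulLinear :=
  ChainComplex.of_d (fun n ↦ ModuleCat.of S (Fin (P.rank n) → S))
    (fun n ↦ ModuleCat.ofHom (P.d n).vecMulLinear) n

/-- The map from the complex to the trivial module placed in degree zero. -/
noncomputable def toSingle :
    P.complex ⟶ (ChainComplex.single₀ _).obj (ModuleCat.of S (TrivialModule ε)) :=
  (P.complex.toSingle₀Equiv _).symm ⟨ModuleCat.ofHom P.aug, by
    rw [complex_d_succ]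
    ext1
    exact P.exact_aug.linearMap_comp_eq_zero⟩

lemma toSingle_f_zero : P.toSingle.f 0 = ModuleCat.ofHom P.aug :=
  ChainComplex.toSingle₀Equiv_symm_apply_f_zero _ _

/-- The resolution as a projective resolution in the category of `S`-modules. -/
noncomputable def projectiveResolution :
    ProjectiveResolution (ModuleCat.of S (TrivialModule ε)) where
  complex := P.complex
  projective n := (IsProjective.iff_projective (R := S) (Fin (P.rank n) → S)).1 inferInstance
  π := P.toSingle
  quasiIso := by
    refine quasiIso_of_exact _ ?_ ?_ fun n ↦ ?_
    · rw [toSingle_f_zero]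
      exact P.aug_surjective
    · rw [toSingle_f_zero, complex_d_succ]
      exact P.exact_aug
    · rw [complex_d_succ, complex_d_succ]
      exact P.exact_succ n

lemma complex_d_comp_eq_zero (n : ℕ)
    (f : P.complex.X n ⟶ ModuleCat.of S (TrivialModule ε)) :
    P.complex.d (n + 1) n ≫ f = 0 := by
  rw [P.complex_d_succ]
  ext1
  refine (Pi.basisFun S _).ext fun i ↦ ?_
  refine linearMap_trivialModule_eq_zero (ε := ε) f.hom fun j ↦ ?_
  change ε ((Pi.basisFun S _ i ᵥ* P.d n) j) = 0
  rw [Pi.basisFun_apply, single_one_vecMul, row_apply, P.map_d_eq_zero]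

theorem finrank_ext (n : ℕ) :
    Module.finrank k (((Ext k (ModuleCat.{u} S) n).obj
      (Opposite.op (ModuleCat.of S (TrivialModule ε)))).obj
      (ModuleCat.of S (TrivialModule ε))) = P.rank n := by
  obtain ⟨e⟩ := nonempty_ext_iso_hom_of_minimal (k := k) P.projectiveResolution
    P.complex_d_comp_eq_zero n
  rw [(e.toLinearEquiv.trans (homTrivialModuleEquiv ε (Fin (P.rank n)))).finrank_eq,
    Module.finrank_fintype_fun_eq_card, Fintype.card_fin]

end MinimalFreeResolution

end MinimalFreeResolution

section PolynomialCombination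

variable {k S ι : Type*} [CommSemiring k] [Semiring S] [Algebra k S] [Fintype ι]

variable (k) in
/-- The combination `∑ i, vᵢ(a) mᵢ` of the elements `mᵢ` with coefficients on the left that are
polynomials in `a`. -/
noncomputable def polynomialCombination (a : S) (m : ι → S) : (ι → k[X]) →ₗ[k] S where
  toFun v := ∑ i, aeval a (v i) * m i
  map_add' v w := by simp only [Pi.add_apply, map_add, add_mul, Finset.sum_add_distrib]
  map_smul' t v := by simp only [Pi.smul_apply, map_smul, smul_mul_assoc, Finset.smul_sum,
    RingHom.id_apply]

lemma polynomialCombination_apply (a : S) (m : ι → S) (v : ι → k[X]) :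
    polynomialCombination k a m v = ∑ i, aeval a (v i) * m i := rfl

lemma polynomialCombination_mul {a x : S} {m : ι → S} {M : Matrix ι ι k[X]}
    (hM : ∀ i, m i * x = polynomialCombination k a m (M i)) (v : ι → k[X]) :
    polynomialCombination k a m v * x = polynomialCombination k a m (v ᵥ* M) := by
  simp only [polynomialCombination_apply] at hM ⊢
  simp only [Finset.sum_mul, mul_assoc, hM, Finset.mul_sum, vecMul, dotProduct, map_sum, map_mul]
  exact Finset.sum_comm

lemma vecMul_aeval_of_vecMul_eq_smul [DecidableEq ι] {A : Matrix ι ι k[X]} {v : ι → k[X]}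
    {μ : k[X]} (hv : v ᵥ* A = μ • v) (p : k[X]) : v ᵥ* aeval A p = p.comp μ • v := by
  have hpow (n : ℕ) : v ᵥ* A ^ n = μ ^ n • v := by
    induction n with
    | zero => simp
    | succ n ih => rw [pow_succ, ← vecMul_vecMul, ih, smul_vecMul, hv, smul_smul, pow_succ]
  induction p using Polynomial.induction_on' with
  | add p q hp hq => rw [map_add, vecMul_add, hp, hq, add_comp, add_smul]
  | monomial n t =>
    rw [aeval_monomial, ← Algebra.smul_def, vecMul_smul, hpow, monomial_comp, ← smul_eq_C_mul,
      smul_assoc]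

end PolynomialCombination

section ColorRelations

variable {k S : Type*} [CommRing k] [Ring S] [Algebra k S] {a b c : S}

/-- The defining relations of the color Lie algebra for `a = e₁`, `b = e₂`, `c = e₃`, oriented as
rules that move `a` to the left and `c` to the right. -/
structure ColorRelations (a b c : S) : Prop where
  b_mul_a : b * a = c - a * b
  c_mul_a : c * a = -(a * c)
  c_mul_b : c * b = b * c
  b_mul_b : b * b = 0
  c_mul_c : c * c = 0

variable (k) in
/-- The element `v₀(a) + v₁(a) b + v₂(a) c + v₃(a) bc`. -/
noncomputable def normalForm (a b c : S) : (Fin 4 → k[X]) →ₗ[k] S :=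
  polynomialCombination k a ![1, b, c, b * c]

variable (k) in
/-- Right multiplication by `a` in the coordinates of `normalForm`, acting on row vectors. -/
noncomputable def mulMatrixA : Matrix (Fin 4) (Fin 4) k[X] :=
  !![X, 0, 0, 0; 0, -X, 1, 0; 0, 0, -X, 0; 0, 0, 0, X]

variable (k) in
/-- Right multiplication by `b` in the coordinates of `normalForm`, acting on row vectors. -/
noncomputable def mulMatrixB : Matrix (Fin 4) (Fin 4) k[X] :=
  !![0, 1, 0, 0; 0, 0, 0, 0; 0, 0, 0, 1; 0, 0, 0, 0]

variable (k) in
/-- Right multiplication by `c` in the coordinates of `normalForm`, acting on row vectors. -/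
noncomputable def mulMatrixC : Matrix (Fin 4) (Fin 4) k[X] :=
  !![0, 0, 1, 0; 0, 0, 0, 1; 0, 0, 0, 0; 0, 0, 0, 0]

lemma mulMatrixA_pow_succ (n : ℕ) :
    mulMatrixA k ^ (n + 1) =
      !![X ^ (n + 1), 0, 0, 0;
        0, (-X) ^ (n + 1), (n + 1 : k[X]) * (-X) ^ n, 0;
        0, 0, (-X) ^ (n + 1), 0;
        0, 0, 0, X ^ (n + 1)] := by
  induction n with
  | zero => simp [mulMatrixA]
  | succ n ih =>
    rw [pow_succ, ih, mulMatrixA]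
    ext i j : 1
    fin_cases i <;> fin_cases j <;> simp [mul_apply, Fin.sum_univ_four] <;> ring

lemma colorRelations_mulMatrix : ColorRelations (mulMatrixA k) (mulMatrixB k) (mulMatrixC k) := by
  constructor <;> ext i j : 1 <;> fin_cases i <;> fin_cases j <;>
    simp [mulMatrixA, mulMatrixB, mulMatrixC, mul_apply, Fin.sum_univ_four]

namespace ColorRelations

lemma b_mul_c_mul_a (h : ColorRelations a b c) : b * c * a = a * (b * c) := by
  rw [mul_assoc, h.c_mul_a, mul_neg, ← mul_assoc, h.b_mul_a, sub_mul, h.c_mul_c, zero_sub,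
    neg_neg, mul_assoc]

lemma normalForm_mul_a (h : ColorRelations a b c) (v : Fin 4 → k[X]) :
    normalForm k a b c v * a = normalForm k a b c (v ᵥ* mulMatrixA k) := by
  refine polynomialCombination_mul (fun i ↦ ?_) v
  fin_cases i <;> simp [polynomialCombination_apply, mulMatrixA, Fin.sum_univ_four, h.b_mul_a,
    h.c_mul_a, h.b_mul_c_mul_a, sub_eq_neg_add]

lemma normalForm_mul_b (h : ColorRelations a b c) (v : Fin 4 → k[X]) :
    normalForm k a b c v * b = normalForm k a b c (v ᵥ* mulMatrixB k) := by
  have b_mul_c_mul_b : b * c * b = 0 := by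
    rw [mul_assoc, h.c_mul_b, ← mul_assoc, h.b_mul_b, zero_mul]
  refine polynomialCombination_mul (fun i ↦ ?_) v
  fin_cases i <;> simp [polynomialCombination_apply, mulMatrixB, Fin.sum_univ_four, h.b_mul_b,
    h.c_mul_b, b_mul_c_mul_b]

lemma normalForm_mul_c (h : ColorRelations a b c) (v : Fin 4 → k[X]) :
    normalForm k a b c v * c = normalForm k a b c (v ᵥ* mulMatrixC k) := by
  refine polynomialCombination_mul (fun i ↦ ?_) v
  fin_cases i <;> simp [polynomialCombination_apply, mulMatrixC, Fin.sum_univ_four, h.c_mul_c,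
    mul_assoc]

lemma normalForm_mul_pow_a (h : ColorRelations a b c) (v : Fin 4 → k[X]) (n : ℕ) :
    normalForm k a b c v * a ^ n = normalForm k a b c (v ᵥ* mulMatrixA k ^ n) := by
  induction n with
  | zero => simp
  | succ n ih => rw [pow_succ, ← mul_assoc, ih, h.normalForm_mul_a, vecMul_vecMul, pow_succ]

end ColorRelations

end ColorRelations

section PBW

/-- The generator `eᵢ₊₁` of `R`. -/
noncomputable abbrev gen (i : Fin 3) : RingQuot CRel := RingQuot.mkAlgHom ℂ CRel (ι ℂ i)

lemma colorRelations_gen : ColorRelations (gen 0) (gen 1) (gen 2) where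
  b_mul_a := by
    rw [eq_sub_iff_add_eq']
    simpa using RingQuot.mkAlgHom_rel ℂ CRel.r12
  c_mul_a := by
    rw [eq_neg_iff_add_eq_zero, add_comm]
    simpa using RingQuot.mkAlgHom_rel ℂ CRel.r13
  c_mul_b := by
    rw [eq_comm, ← sub_eq_zero]
    simpa using RingQuot.mkAlgHom_rel ℂ CRel.r23
  b_mul_b := by simpa using RingQuot.mkAlgHom_rel ℂ CRel.r22
  c_mul_c := by simpa using RingQuot.mkAlgHom_rel ℂ CRel.r33

/-- The homomorphism from `R` determined by elements satisfying its defining relations. -/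
noncomputable def ColorRelations.liftHom {T : Type*} [Ring T] [Algebra ℂ T] {x y z : T}
    (h : ColorRelations x y z) : RingQuot CRel →ₐ[ℂ] T :=
  RingQuot.liftAlgHom ℂ ⟨FreeAlgebra.lift ℂ ![x, y, z], fun {_ _} hr ↦ by
    induction hr <;> simp [h.b_mul_a, h.c_mul_a, h.c_mul_b, h.b_mul_b, h.c_mul_c]⟩

lemma ColorRelations.liftHom_gen {T : Type*} [Ring T] [Algebra ℂ T] {x y z : T}
    (h : ColorRelations x y z) (i : Fin 3) :
    h.liftHom (gen i) = ![x, y, z] i := by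
  simp [liftHom, gen]

/-- Right multiplication by an element of `R` in the coordinates of `normalForm`, as an action of
`R` on row vectors. -/
noncomputable def rightMulMatrix : RingQuot CRel →ₐ[ℂ] Matrix (Fin 4) (Fin 4) ℂ[X] :=
  (colorRelations_mulMatrix (k := ℂ)).liftHom

lemma normalForm_gen_mul (v : Fin 4 → ℂ[X]) (x : RingQuot CRel) :
    normalForm ℂ (gen 0) (gen 1) (gen 2) v * x =
      normalForm ℂ (gen 0) (gen 1) (gen 2) (v ᵥ* rightMulMatrix x) := by
  obtain ⟨x, rfl⟩ := RingQuot.mkAlgHom_surjective ℂ CRel x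
  induction x using FreeAlgebra.induction generalizing v with
  | grade0 t =>
    rw [AlgHom.commutes, AlgHom.commutes, ← Algebra.commutes, ← Algebra.smul_def,
      Algebra.algebraMap_eq_smul_one, vecMul_smul, vecMul_one, map_smul]
  | grade1 i =>
    rw [rightMulMatrix, ColorRelations.liftHom_gen]
    fin_cases i
    exacts [colorRelations_gen.normalForm_mul_a v, colorRelations_gen.normalForm_mul_b v,
      colorRelations_gen.normalForm_mul_c v]
  | mul x y hx hy => rw [map_mul, ← mul_assoc, hx, hy, vecMul_vecMul, map_mul]
  | add x y hx hy => rw [map_add, mul_add, hx, hy, map_add, vecMul_add, map_add]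

lemma single_vecMul_rightMulMatrix_normalForm (v : Fin 4 → ℂ[X]) :
    Pi.single 0 1 ᵥ* rightMulMatrix (normalForm ℂ (gen 0) (gen 1) (gen 2) v) = v := by
  have hA : Pi.single 0 1 ᵥ* mulMatrixA ℂ = (X : ℂ[X]) • Pi.single 0 1 := by
    ext i : 1
    fin_cases i <;> simp [mulMatrixA]
  have haeval (p : ℂ[X]) : Pi.single 0 1 ᵥ* aeval (mulMatrixA ℂ) p = p • Pi.single 0 1 := by
    rw [vecMul_aeval_of_vecMul_eq_smul hA, comp_X]
  simp only [normalForm, polynomialCombination_apply, map_sum, map_mul, vecMul_sum,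
    ← vecMul_vecMul, ← aeval_algHom_apply]
  simp only [rightMulMatrix, ColorRelations.liftHom_gen, cons_val_zero, haeval, smul_vecMul]
  ext i : 1
  fin_cases i <;>
    simp [Fin.sum_univ_four, mulMatrixB, mulMatrixC, ColorRelations.liftHom_gen, mul_apply]

theorem normalForm_gen_bijective :
    Function.Bijective (normalForm ℂ (gen 0) (gen 1) (gen 2)) := by
  have hone : normalForm ℂ (gen 0) (gen 1) (gen 2) (Pi.single 0 1) = 1 := by
    simp [normalForm, polynomialCombination_apply, Fin.sum_univ_four]
  refine Function.bijective_iff_has_inverse.2 ⟨fun x ↦ Pi.single 0 1 ᵥ* rightMulMatrix x,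
    single_vecMul_rightMulMatrix_normalForm, fun x ↦ ?_⟩
  rw [← normalForm_gen_mul, hone, one_mul]

end PBW

section Syzygies

lemma natCast_add_one_dvd {k : Type*} [Field k] [CharZero k] (n : ℕ) (p : k[X]) :
    (n + 1 : k[X]) ∣ p := by
  have hunit : IsUnit (C (n + 1 : k)) := isUnit_C.2 (IsUnit.mk0 _ n.cast_add_one_ne_zero)
  simpa using hunit.dvd

lemma exists_syzygy_coeffs {k : Type*} [Field k] [CharZero k] {n : ℕ} {p q : Fin 4 → k[X]}
    (hp₁ : (-1) ^ n * p 0 + q 1 * (-X) ^ (n + 1) = 0)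
    (hp₃ : (-1) ^ n * p 2 + q 3 * X ^ (n + 1) = 0)
    (hq₁ : q 0 * X = 0) (hq₃ : (n + 1 : k[X]) * q 1 - q 2 * X = 0) :
    ∃ r s, (q 0 = 0 ∧ q 1 = r * X ∧ q 2 = (n + 1 : k[X]) * r ∧
        q 3 = ((n + 1 : ℕ) + 1 : k[X]) * s) ∧
      p 0 = r * X ^ (n + 2) ∧ p 2 = q 3 * (-X) ^ (n + 1) := by
  have hsign : (-1 : k[X]) ^ n * (-1) ^ n = 1 := by rw [← mul_pow, neg_one_mul, neg_neg, one_pow]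
  obtain ⟨r, hr⟩ := natCast_add_one_dvd n (q 2)
  obtain ⟨s, hs⟩ := natCast_add_one_dvd (n + 1) (q 3)
  have hrX : q 1 = r * X := by
    refine mul_left_cancel₀ (n.cast_add_one_ne_zero (R := k[X])) ?_
    linear_combination hq₃ + X * hr
  refine ⟨r, s, ⟨(mul_eq_zero_iff_right X_ne_zero).1 hq₁, hrX, hr, hs⟩, ?_, ?_⟩
  · rw [hrX, neg_pow] at hp₁
    linear_combination (-1) ^ n * hp₁ - (p 0 - r * X ^ (n + 2)) * hsign
  · rw [neg_pow]
    linear_combination (-1) ^ n * hp₃ - p 2 * hsign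

variable {k S : Type*} [Ring S] {a b c : S}

namespace ColorRelations

lemma c_mul_pow_a (h : ColorRelations a b c) (n : ℕ) : c * a ^ n = (-a) ^ n * c :=
  SemiconjBy.pow_right (h.c_mul_a.trans (neg_mul a c).symm) n

lemma nsmul_c_add_mul_pow_a (h : ColorRelations a b c) (n : ℕ) :
    (n • c + a * b) * a ^ n = (-a) ^ n * (a * b) := by
  induction n with
  | zero => simp
  | succ n ih =>
    calc ((n + 1) • c + a * b) * a ^ (n + 1)
        = (n • c + a * b) * a ^ n * a + c * a ^ (n + 1) := by
          rw [succ_nsmul, pow_succ]; noncomm_ring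
      _ = (-a) ^ n * (a * (b * a)) + (-a) ^ n * -a * c := by
          rw [ih, h.c_mul_pow_a, pow_succ]; noncomm_ring
      _ = (-a) ^ (n + 1) * (a * b) := by
          rw [h.b_mul_a, pow_succ]; noncomm_ring

lemma succ_nsmul_c_add_mul_nsmul_c_add (h : ColorRelations a b c) (n : ℕ) :
    ((n + 1) • c + a * b) * (n • c + a * b) = 0 := by
  have hcab : c * (a * b) = -(a * (b * c)) := by
    rw [← mul_assoc, h.c_mul_a, neg_mul, mul_assoc, h.c_mul_b]
  have habab : a * b * (a * b) = a * (b * c) := by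
    rw [mul_assoc, ← mul_assoc b, h.b_mul_a, sub_mul, mul_assoc a, h.b_mul_b, mul_zero,
      sub_zero, h.c_mul_b]
  simp only [add_mul, mul_add, smul_mul_assoc, mul_smul_comm, h.c_mul_c, hcab, habab,
    mul_assoc a b c]
  module

lemma normalForm_mul_b_add_normalForm_mul_pow_a [CommRing k] [Algebra k S]
    (h : ColorRelations a b c) (n : ℕ) (p q : Fin 4 → k[X]) :
    normalForm k a b c p * ((-1 : ℤ) ^ n • b) + normalForm k a b c q * a ^ (n + 1) =
      normalForm k a b c ![q 0 * X ^ (n + 1), (-1) ^ n * p 0 + q 1 * (-X) ^ (n + 1),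
        ((n + 1 : k[X]) * q 1 - q 2 * X) * (-X) ^ n, (-1) ^ n * p 2 + q 3 * X ^ (n + 1)] := by
  rw [mul_smul_comm, h.normalForm_mul_b, h.normalForm_mul_pow_a, ← map_zsmul, ← map_add]
  congr 1
  ext i : 1
  fin_cases i <;>
    simp [mulMatrixA_pow_succ, mulMatrixB, vecMul_eq_sum, Fin.sum_univ_four] <;> ring

lemma normalForm_mul_nsmul_c_add [CommRing k] [Algebra k S] (h : ColorRelations a b c) (n : ℕ)
    (q : Fin 4 → k[X]) :
    normalForm k a b c q * (n • c + a * b) =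
      normalForm k a b c ![0, q 0 * X, n * q 0, (n + 1 : k[X]) * q 1 - q 2 * X] := by
  rw [mul_add, mul_smul_comm, ← mul_assoc, h.normalForm_mul_c, h.normalForm_mul_a,
    h.normalForm_mul_b, ← map_nsmul, ← map_add]
  congr 1
  ext i : 1
  fin_cases i <;>
    simp [mulMatrixA, mulMatrixB, mulMatrixC, vecMul_eq_sum, Fin.sum_univ_four] <;> ring

theorem exists_syzygy [Field k] [CharZero k] [Algebra k S] (h : ColorRelations a b c)
    (hpbw : Function.Bijective (normalForm k a b c)) {n : ℕ} {x y : S}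
    (hx : x * ((-1 : ℤ) ^ n • b) + y * a ^ (n + 1) = 0) (hy : y * (n • c + a * b) = 0) :
    ∃ u v, u * ((-1 : ℤ) ^ (n + 1) • b) + v * a ^ (n + 2) = x ∧
      v * ((n + 1) • c + a * b) = y := by
  obtain ⟨p, rfl⟩ := hpbw.2 x
  obtain ⟨q, rfl⟩ := hpbw.2 y
  rw [h.normalForm_mul_b_add_normalForm_mul_pow_a, map_eq_zero_iff _ hpbw.1] at hx
  rw [h.normalForm_mul_nsmul_c_add, map_eq_zero_iff _ hpbw.1] at hy
  obtain ⟨r, s, ⟨hq₀, hq₁, hq₂, hq₃⟩, hp₀, hp₂⟩ := exists_syzygy_coeffs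
    (congrFun hx 1) (congrFun hx 3) (congrFun hy 1) (congrFun hy 3)
  have hsign (t : k[X]) : (-1) ^ (n + 1) * ((-1) ^ (n + 1) * t) = t := by
    rw [← mul_assoc, ← mul_pow, neg_one_mul, neg_neg, one_pow, one_mul]
  refine ⟨normalForm k a b c ![(-1) ^ (n + 1) * (p 1 - s * (-X) ^ (n + 2)), 0,
    (-1) ^ (n + 1) * p 3, 0], normalForm k a b c ![r, s, 0, 0], ?_, ?_⟩
  · rw [h.normalForm_mul_b_add_normalForm_mul_pow_a]
    congr 1
    ext i : 1
    fin_cases i <;> simp [hp₀, hp₂, hq₃, hsign]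
  · rw [h.normalForm_mul_nsmul_c_add]
    congr 1
    ext i : 1
    fin_cases i <;> simp [hq₀, hq₁, hq₂, hq₃]

end ColorRelations

end Syzygies

section Resolution

/-- The ranks `1, 2, 2, …` of the terms of the resolution. -/
def resolutionRank : ℕ → ℕ
  | 0 => 1
  | _ + 1 => 2

variable {k S : Type*} [Field k] [Ring S] [Algebra k S] {a b c : S}

/-- The differential `S² → S` of the resolution, onto the left ideal generated by `b` and `a`. -/
def generatorColumn (a b : S) : Matrix (Fin 2) (Fin 1) S := !![b; a]

/-- For `n ≥ 1`, the differential of the resolution from degree `n + 1` to degree `n`. The matrix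
for `n = 0` is not part of the resolution, but its rows have the same syzygies as those of
`generatorColumn`. -/
def syzygyMatrix (a b c : S) (n : ℕ) : Matrix (Fin 2) (Fin 2) S :=
  !![(-1 : ℤ) ^ n • b, 0; a ^ (n + 1), n • c + a * b]

lemma vecMul_generatorColumn (v : Fin 2 → S) :
    v ᵥ* generatorColumn a b = ![v 0 * b + v 1 * a] := by
  ext i : 1
  fin_cases i
  simp [generatorColumn, vecMul_eq_sum]

lemma vecMul_syzygyMatrix (n : ℕ) (v : Fin 2 → S) :
    v ᵥ* syzygyMatrix a b c n =
      ![v 0 * ((-1 : ℤ) ^ n • b) + v 1 * a ^ (n + 1), v 1 * (n • c + a * b)] := by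
  ext i : 1
  fin_cases i <;> simp [syzygyMatrix, vecMul_eq_sum]

lemma syzygyMatrix_zero_mul : syzygyMatrix a b c 0 * !![(1 : S); 0] = generatorColumn a b := by
  ext i j : 1
  fin_cases i <;> fin_cases j <;> simp [syzygyMatrix, generatorColumn]

namespace ColorRelations

lemma syzygyMatrix_succ_mul_syzygyMatrix (h : ColorRelations a b c) (n : ℕ) :
    syzygyMatrix a b c (n + 1) * syzygyMatrix a b c n = 0 := by
  have h₀₀ : (-1 : ℤ) ^ (n + 1) • b * ((-1 : ℤ) ^ n • b) = 0 := by
    rw [smul_mul_smul_comm, h.b_mul_b, smul_zero]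
  have h₁₀ : a ^ (n + 2) * ((-1 : ℤ) ^ n • b) + ((n + 1) • c + a * b) * a ^ (n + 1) = 0 := by
    rw [h.nsmul_c_add_mul_pow_a]
    rcases n.even_or_odd with hn | hn <;> simp [hn.neg_one_pow, hn.neg_pow, pow_succ, mul_assoc]
  rw [syzygyMatrix, syzygyMatrix, mul_fin_two, h₀₀, h₁₀, h.succ_nsmul_c_add_mul_nsmul_c_add]
  ext i j : 1
  fin_cases i <;> fin_cases j <;> simp

lemma exact_syzygyMatrix [CharZero k] (h : ColorRelations a b c)
    (hpbw : Function.Bijective (normalForm k a b c)) (n : ℕ) :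
    Function.Exact (syzygyMatrix a b c (n + 1)).vecMulLinear
      (syzygyMatrix a b c n).vecMulLinear := by
  intro v
  constructor
  · intro hv
    rw [vecMulLinear_apply, vecMul_syzygyMatrix] at hv
    obtain ⟨x, y, hxy, hy⟩ := h.exists_syzygy hpbw (congrFun hv 0) (congrFun hv 1)
    refine ⟨![x, y], (vecMul_syzygyMatrix _ _).trans ?_⟩
    ext i : 1
    fin_cases i
    exacts [hxy, hy]
  · rintro ⟨w, rfl⟩
    simp only [vecMulLinear_apply, vecMul_vecMul, h.syzygyMatrix_succ_mul_syzygyMatrix, vecMul_zero]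

lemma exact_syzygyMatrix_generatorColumn [CharZero k] (h : ColorRelations a b c)
    (hpbw : Function.Bijective (normalForm k a b c)) :
    Function.Exact (syzygyMatrix a b c 1).vecMulLinear (generatorColumn a b).vecMulLinear := by
  intro v
  rw [← h.exact_syzygyMatrix hpbw 0 v]
  simp only [vecMulLinear_apply]
  constructor
  · intro hv
    rw [vecMul_generatorColumn] at hv
    have hv₀ : v 0 * b + v 1 * a = 0 := congrFun hv 0
    have hv₁ : v 1 * (a * b) = 0 := by
      calc v 1 * (a * b) = (v 0 * b + v 1 * a) * b - v 0 * (b * b) := by noncomm_ring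
        _ = 0 := by rw [hv₀, h.b_mul_b, zero_mul, mul_zero, sub_zero]
    rw [vecMul_syzygyMatrix]
    ext i : 1
    fin_cases i <;> simp [hv₀, hv₁]
  · intro hv
    rw [← syzygyMatrix_zero_mul (c := c), ← vecMul_vecMul, hv, zero_vecMul]

lemma exists_mul_b_add_mul_a (h : ColorRelations a b c) {v : Fin 4 → k[X]}
    (hv : (v 0).coeff 0 = 0) : ∃ x y, x * b + y * a = normalForm k a b c v := by
  refine ⟨normalForm k a b c ![v 1 + v 2 * X, 0, v 3, 0],
    normalForm k a b c ![(v 0).divX, v 2, 0, 0], ?_⟩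
  have key := h.normalForm_mul_b_add_normalForm_mul_pow_a 0
    ![v 1 + v 2 * X, 0, v 3, 0] ![(v 0).divX, v 2, 0, 0]
  rw [pow_zero, one_smul, zero_add, pow_one] at key
  rw [key]
  have hX : (v 0).divX * X = v 0 := by simpa [hv] using divX_mul_X_add (v 0)
  congr 1
  ext i : 1
  fin_cases i <;> simp [hX]

lemma map_b_eq_zero (h : ColorRelations a b c) (ε : S →ₐ[k] k) : ε b = 0 :=
  mul_self_eq_zero.1 (by rw [← map_mul, h.b_mul_b, map_zero])

lemma map_c_eq_zero (h : ColorRelations a b c) (ε : S →ₐ[k] k) : ε c = 0 :=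
  mul_self_eq_zero.1 (by rw [← map_mul, h.c_mul_c, map_zero])

lemma map_normalForm (h : ColorRelations a b c) {ε : S →ₐ[k] k} (ha : ε a = 0)
    (v : Fin 4 → k[X]) :
    ε (normalForm k a b c v) = (v 0).coeff 0 := by
  simp [normalForm, polynomialCombination_apply, Fin.sum_univ_four, h.map_b_eq_zero,
    h.map_c_eq_zero, ← aeval_algHom_apply, ha, coeff_zero_eq_aeval_zero]

lemma exact_generatorColumn_augmentation (h : ColorRelations a b c)
    (hpbw : Function.Surjective (normalForm k a b c)) {ε : S →ₐ[k] k} (ha : ε a = 0) :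
    Function.Exact (generatorColumn a b).vecMulLinear
      (augmentation ε ∘ₗ LinearMap.proj (R := S) (φ := fun _ : Fin 1 ↦ S) 0) := by
  intro v
  change ε (v 0) = 0 ↔ _
  constructor
  · intro hv
    obtain ⟨p, hp⟩ := hpbw (v 0)
    rw [← hp, h.map_normalForm ha] at hv
    obtain ⟨x, y, hxy⟩ := h.exists_mul_b_add_mul_a hv
    refine ⟨![x, y], (vecMul_generatorColumn _).trans ?_⟩
    ext i : 1
    fin_cases i
    exact hxy.trans hp
  · rintro ⟨w, rfl⟩
    rw [vecMulLinear_apply, vecMul_generatorColumn]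
    simp [h.map_b_eq_zero, ha]

lemma map_generatorColumn (h : ColorRelations a b c) {ε : S →ₐ[k] k} (ha : ε a = 0)
    (i : Fin 2) (j : Fin 1) : ε (generatorColumn a b i j) = 0 := by
  fin_cases i <;> fin_cases j <;> simp [generatorColumn, ha, h.map_b_eq_zero]

lemma map_syzygyMatrix (h : ColorRelations a b c) {ε : S →ₐ[k] k} (ha : ε a = 0) (n : ℕ)
    (i j : Fin 2) : ε (syzygyMatrix a b c n i j) = 0 := by
  fin_cases i <;> fin_cases j <;>
    simp [syzygyMatrix, ha, h.map_b_eq_zero, h.map_c_eq_zero]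

/-- The resolution of the trivial module with terms `⋯ → S² → S² → S`. -/
noncomputable def minimalFreeResolution [CharZero k] (h : ColorRelations a b c)
    (hpbw : Function.Bijective (normalForm k a b c)) {ε : S →ₐ[k] k} (ha : ε a = 0) :
    MinimalFreeResolution ε where
  rank := resolutionRank
  d
    | 0 => generatorColumn a b
    | n + 1 => syzygyMatrix a b c (n + 1)
  aug := augmentation ε ∘ₗ LinearMap.proj (R := S) (φ := fun _ : Fin 1 ↦ S) 0
  aug_surjective z := ⟨fun _ ↦ algebraMap k S z, ε.commutes z⟩
  exact_aug := h.exact_generatorColumn_augmentation hpbw.2 ha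
  exact_succ
    | 0 => h.exact_syzygyMatrix_generatorColumn hpbw
    | n + 1 => h.exact_syzygyMatrix hpbw (n + 1)
  map_d_eq_zero
    | 0 => h.map_generatorColumn ha
    | n + 1 => h.map_syzygyMatrix ha (n + 1)

end ColorRelations

lemma mk_resolutionRank_mul_one_sub_X (R : Type*) [Ring R] :
    (PowerSeries.mk fun n ↦ (resolutionRank n : R)) * (1 - PowerSeries.X) = 1 + PowerSeries.X := by
  ext n
  rw [mul_sub, mul_one]
  match n with
  | 0 => simp [resolutionRank]
  | 1 => norm_num [resolutionRank, PowerSeries.coeff_succ_mul_X, PowerSeries.coeff_one]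
  | n + 2 =>
    simp [resolutionRank, PowerSeries.coeff_succ_mul_X, PowerSeries.coeff_one, PowerSeries.coeff_X]

lemma extDim_eq_resolutionRank {ε : RingQuot CRel →ₐ[ℂ] ℂ} (hε : ε (gen 0) = 0) (n : ℕ) :
    extDim (RingQuot CRel) ε n = resolutionRank n :=
  (colorRelations_gen.minimalFreeResolution normalForm_gen_bijective hε).finrank_ext n

end Resolution

theorem betti_numbers (ε : RingQuot CRel →ₐ[ℂ] ℂ)
    (hε : ∀ i : Fin 3, ε (RingQuot.mkAlgHom ℂ CRel (ι ℂ i)) = 0) :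
    (extDim (RingQuot CRel) ε 0 = 1 ∧ ∀ n ≥ 1, extDim (RingQuot CRel) ε n = 2) ∧
    (PowerSeries.mk fun n => (extDim (RingQuot CRel) ε n : ℚ)) * (1 - PowerSeries.X) =
      1 + PowerSeries.X := by
  simp only [extDim_eq_resolutionRank (hε 0)]
  refine ⟨⟨rfl, fun n hn ↦ ?_⟩, mk_resolutionRank_mul_one_sub_X ℚ⟩
  obtain ⟨m, rfl⟩ := Nat.exists_eq_add_of_le' hn
  rfl
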